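/- arXiv:2507.12078 — 5 statements merged into one kernel-verified Lean document; each statement's English description precedes it below -/
import Mathlib

section
/- For all pairwise distinct natural numbers i, j, k, the triple intersection u i ∩ u j ∩ u k is the empty set (the bottom element of the Boolean algebra Set I). -/
/-- The index set `I = {(n,m) : ℕ × ℕ | n ≤ m}`. -/
def I : Set (ℕ × ℕ) := {p | p.1 ≤ p.2}

/-- The element `u n = {(n,m) | n ≤ m} ∪ {(m,n) | m < n ∧ E m n}` of the Boolean algebra `Set I`. -/
def u (E : ℕ → ℕ → Prop) (n : ℕ) : Set I :=
  {p : I | (p.val.1 = n ∧ n ≤ p.val.2) ∨ (p.val.2 = n ∧ p.val.1 < n ∧ E p.val.1 n)}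

theorem eq_fst_or_eq_snd_of_mem_u {E : ℕ → ℕ → Prop} {n : ℕ} {p : I} (hp : p ∈ u E n) :
    n = p.val.1 ∨ n = p.val.2 :=
  hp.imp (fun h => h.1.symm) (fun h => h.1.symm)

theorem triple_intersection_empty_general (E : ℕ → ℕ → Prop) {i j k : ℕ}
    (hij : i ≠ j) (hjk : j ≠ k) (hik : i ≠ k) :
    u E i ∩ u E j ∩ u E k = ∅ := by
  refine Set.eq_empty_of_forall_notMem ?_
  rintro p ⟨⟨hi, hj⟩, hk⟩
  have indices_subset : ({i, j, k} : Finset ℕ) ⊆ {p.val.1, p.val.2} := by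
    simp only [Finset.insert_subset_iff, Finset.singleton_subset_iff, Finset.mem_insert,
      Finset.mem_singleton]
    exact ⟨eq_fst_or_eq_snd_of_mem_u hi, eq_fst_or_eq_snd_of_mem_u hj,
      eq_fst_or_eq_snd_of_mem_u hk⟩
  have three_le_two : 3 ≤ 2 :=
    calc
      3 = ({i, j, k} : Finset ℕ).card := (Finset.card_eq_three.2 ⟨i, j, k, hij, hik, hjk, rfl⟩).symm
      _ ≤ ({p.val.1, p.val.2} : Finset ℕ).card := Finset.card_le_card indices_subset
      _ ≤ 2 := Finset.card_le_two
  exact absurd three_le_two (by decide)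

/-- For pairwise distinct `i, j, k`, the triple intersection `u i ∩ u j ∩ u k` is empty. -/
theorem triple_intersection_empty (E : ℕ → ℕ → Prop)
    (hsym : ∀ a b, E a b → E b a) (hirr : ∀ a, ¬ E a a)
    (i j k : ℕ) (hij : i ≠ j) (hjk : j ≠ k) (hik : i ≠ k) :
    u E i ∩ u E j ∩ u E k = ∅ :=
  triple_intersection_empty_general E hij hjk hik
end

section
/- For all natural numbers i < j: if E i j holds then u i ∩ u j = {(i,j)}, and if E i j does not hold then u i ∩ u j = ∅. -/
theorem mem_u_iff {E : ℕ → ℕ → Prop} {n : ℕ} {p : I} :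
    p ∈ u E n ↔ p.val.1 = n ∨ (p.val.2 = n ∧ p.val.1 < n ∧ E p.val.1 n) :=
  or_congr_left <| and_iff_left_of_imp fun hfst ↦ hfst ▸ p.property

theorem mem_u_inter_u_iff {E : ℕ → ℕ → Prop} {i j : ℕ} (hij : i < j) {p : I} :
    p ∈ u E i ∩ u E j ↔ p.val = (i, j) ∧ E i j := by
  rw [Set.mem_inter_iff, mem_u_iff, mem_u_iff, Prod.ext_iff]
  constructor
  · rintro ⟨hfst_i | ⟨hsnd_i, hfst_lt, -⟩, hfst_j | ⟨hsnd_j, -, hadj⟩⟩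
    · exact absurd (hfst_i.symm.trans hfst_j) hij.ne
    · exact ⟨⟨hfst_i, hsnd_j⟩, hfst_i ▸ hadj⟩
    · exact absurd (hfst_j ▸ hfst_lt) hij.not_gt
    · exact absurd (hsnd_i.symm.trans hsnd_j) hij.ne
  · rintro ⟨⟨hfst, hsnd⟩, hadj⟩
    exact ⟨.inl hfst, .inr ⟨hsnd, hfst ▸ hij, hfst ▸ hadj⟩⟩

theorem pairwise_intersection_general (E : ℕ → ℕ → Prop) {i j : ℕ} (hij : i < j) :
    (E i j → u E i ∩ u E j = {⟨(i, j), hij.le⟩}) ∧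
    (¬ E i j → u E i ∩ u E j = ∅) := by
  constructor
  · intro hadj
    ext p
    rw [mem_u_inter_u_iff hij, and_iff_left hadj, Set.mem_singleton_iff, Subtype.ext_iff]
  · intro hnadj
    exact Set.eq_empty_of_forall_notMem fun p hp ↦ hnadj ((mem_u_inter_u_iff hij).mp hp).2

/-- For `i < j`: if `E i j` then `u i ∩ u j = {(i,j)}`, and if `¬ E i j` then `u i ∩ u j = ∅`. -/
theorem pairwise_intersection (E : ℕ → ℕ → Prop)
    (hsym : ∀ a b, E a b → E b a) (hirr : ∀ a, ¬ E a a)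
    (i j : ℕ) (hij : i < j) :
    (E i j → u E i ∩ u E j = {⟨(i, j), hij.le⟩}) ∧
    (¬ E i j → u E i ∩ u E j = ∅) :=
  pairwise_intersection_general E hij
end

section
/- For all distinct natural numbers i and j: u i ≠ u j, and u i ∩ u j ≠ ∅ if and only if E i j holds. -/
/-- The sets `u n` over an arbitrary order `α`: they represent the graph `E` as an intersection graph.
The paper's index set `I` is encoded as a subtype of `α × α`, so that `u E` is definitionally the
case `α = ℕ`. -/
def intersectionRep {α : Type*} [Preorder α] (E : α → α → Prop) (n : α) :
    Set {p : α × α // p.1 ≤ p.2} :=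
  {p | (p.val.1 = n ∧ n ≤ p.val.2) ∨ (p.val.2 = n ∧ p.val.1 < n ∧ E p.val.1 n)}

section Preorder

variable {α : Type*} [Preorder α] {E : α → α → Prop} {i j : α}

theorem diag_mem_intersectionRep_iff :
    ⟨(i, i), le_rfl⟩ ∈ intersectionRep E j ↔ i = j := by
  constructor
  · rintro (⟨hij, -⟩ | ⟨hij, -⟩) <;> exact hij
  · rintro rfl
    exact Or.inl ⟨rfl, le_rfl⟩

theorem intersectionRep_injective : Function.Injective (intersectionRep E) := by
  intro i j h
  rw [← diag_mem_intersectionRep_iff (E := E), ← h, diag_mem_intersectionRep_iff]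

theorem mem_intersectionRep_inter_iff_of_lt (hij : i < j) {p : {p : α × α // p.1 ≤ p.2}} :
    p ∈ intersectionRep E i ∩ intersectionRep E j ↔ p.val = (i, j) ∧ E i j := by
  obtain ⟨⟨a, b⟩, hab⟩ := p
  constructor
  · rintro ⟨⟨rfl : a = i, -⟩ | ⟨rfl : b = i, -⟩, ⟨rfl : a = j, -⟩ | ⟨rfl : b = j, -, hE⟩⟩
    · exact absurd hij (lt_irrefl _)
    · exact ⟨rfl, hE⟩
    · exact absurd hab hij.not_ge
    · exact absurd hij (lt_irrefl _)
  · rintro ⟨⟨⟩, hE⟩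
    exact ⟨Or.inl ⟨rfl, hij.le⟩, Or.inr ⟨rfl, hij, hE⟩⟩

theorem intersectionRep_inter_nonempty_iff_of_lt (hij : i < j) :
    (intersectionRep E i ∩ intersectionRep E j).Nonempty ↔ E i j := by
  simp only [Set.Nonempty, mem_intersectionRep_inter_iff_of_lt hij]
  exact ⟨fun ⟨_, _, hE⟩ ↦ hE, fun hE ↦ ⟨⟨(i, j), hij.le⟩, rfl, hE⟩⟩

end Preorder

section LinearOrder

variable {α : Type*} [LinearOrder α] {E : α → α → Prop} {i j : α}

theorem intersectionRep_inter_nonempty_iff (hsym : ∀ a b, E a b → E b a) (hij : i ≠ j) :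
    (intersectionRep E i ∩ intersectionRep E j).Nonempty ↔ E i j := by
  obtain hlt | hgt := hij.lt_or_gt
  · exact intersectionRep_inter_nonempty_iff_of_lt hlt
  · rw [Set.inter_comm, intersectionRep_inter_nonempty_iff_of_lt hgt]
    exact ⟨hsym j i, hsym i j⟩

theorem u_injective_and_edge_criterion_general (hsym : ∀ a b, E a b → E b a) (hij : i ≠ j) :
    intersectionRep E i ≠ intersectionRep E j ∧
      (intersectionRep E i ∩ intersectionRep E j ≠ ∅ ↔ E i j) := by
  rw [← Set.nonempty_iff_ne_empty]
  exact ⟨intersectionRep_injective.ne hij, intersectionRep_inter_nonempty_iff hsym hij⟩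

end LinearOrder

/-- For distinct `i, j`: `u i ≠ u j`, and `u i ∩ u j ≠ ∅` iff `E i j`. -/
theorem u_injective_and_edge_criterion (E : ℕ → ℕ → Prop)
    (hsym : ∀ a b, E a b → E b a) (hirr : ∀ a, ¬ E a a)
    (i j : ℕ) (hij : i ≠ j) :
    u E i ≠ u E j ∧ (u E i ∩ u E j ≠ ∅ ↔ E i j) :=
  u_injective_and_edge_criterion_general hsym hij
end

section
/- Let L be a Boolean algebra, S a finite subset of L, and B the Boolean subalgebra of L generated by S. Then an element a ∈ L is an atom of B if and only if a ≠ ⊥ and there exists a subset T ⊆ S such that a = (⨅ s ∈ T, s) ⊓ (⨅ s ∈ S \ T, sᶜ), where an empty infimum is interpreted as ⊤. -/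
/-!
A nonzero element `a` of a Boolean subalgebra `B` is an atom of `B` exactly when it decides every
`b ∈ B`, meaning `a ≤ b` or `a ≤ bᶜ`. The elements decided by `a` form a Boolean subalgebra, so it
suffices to decide a generating set. A meet of generators and complements containing one of `s`,
`sᶜ` for each generator `s` does so by construction; conversely, an atom lies below such a meet,
and the meet, deciding the atom too, must equal it.
-/

/-- A Boolean subalgebra of a Boolean algebra, i.e. a subset containing `⊥` and `⊤` and
closed under `⊓`, `⊔`, and complement. -/
def IsBoolSubalg {L : Type*} [BooleanAlgebra L] (B : Set L) : Prop :=
  ⊥ ∈ B ∧ ⊤ ∈ B ∧ (∀ x ∈ B, ∀ y ∈ B, x ⊓ y ∈ B) ∧ (∀ x ∈ B, ∀ y ∈ B, x ⊔ y ∈ B) ∧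
    ∀ x ∈ B, xᶜ ∈ B

/-- The Boolean subalgebra generated by a set: the smallest Boolean subalgebra containing it. -/
def boolGen {L : Type*} [BooleanAlgebra L] (S : Set L) : Set L :=
  ⋂₀ {B | IsBoolSubalg B ∧ S ⊆ B}

/-- `a` is an atom of the Boolean subalgebra `B`: it belongs to `B`, is nonzero, and every
element of `B` below it is `⊥` or `a` itself. -/
def IsAtomOfSet {L : Type*} [BooleanAlgebra L] (B : Set L) (a : L) : Prop :=
  a ∈ B ∧ a ≠ ⊥ ∧ ∀ b ∈ B, b ≤ a → b = ⊥ ∨ b = a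

section

variable {L : Type*} [BooleanAlgebra L] {S : Set L} {B : BooleanSubalgebra L} {a b m : L}

open BooleanSubalgebra (closure closure_le mem_closure)

theorem isBoolSubalg_iff_exists_coe_eq {s : Set L} :
    IsBoolSubalg s ↔ ∃ B : BooleanSubalgebra L, (B : Set L) = s := by
  constructor
  · rintro ⟨hbot, -, hinf, hsup, hcompl⟩
    exact ⟨{ carrier := s
             bot_mem' := hbot
             infClosed' := fun x hx y hy => hinf x hx y hy
             supClosed' := fun x hx y hy => hsup x hx y hy
             compl_mem' := fun {x} hx => hcompl x hx }, rfl⟩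
  · rintro ⟨B, rfl⟩
    exact ⟨B.bot_mem, B.top_mem, fun _ hx _ hy => B.inf_mem hx hy,
      fun _ hx _ hy => B.sup_mem hx hy, fun _ hx => B.compl_mem hx⟩

theorem boolGen_eq_closure (S : Set L) : boolGen S = closure S := by
  ext x
  simp only [boolGen, isBoolSubalg_iff_exists_coe_eq, Set.mem_sInter, Set.mem_ofPred_eq, and_imp,
    forall_exists_index, forall_apply_eq_imp_iff, SetLike.mem_coe, mem_closure]

/-- The Boolean subalgebra of the elements `b` decided by `m`, i.e. such that `m` lies below `b` or
below its complement. A nonzero element of a subalgebra `B` is an atom of `B` when it decides all of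
`B`. -/
def decidedBy (m : L) : BooleanSubalgebra L where
  carrier := {b | m ≤ b ∨ m ≤ bᶜ}
  bot_mem' := Or.inr (by rw [compl_bot]; exact le_top)
  compl_mem' := by
    rintro x (hx | hx)
    · exact Or.inr (by rwa [compl_compl])
    · exact Or.inl hx
  supClosed' := by
    rintro x (hx | hx) y (hy | hy)
    · exact Or.inl (le_sup_of_le_left hx)
    · exact Or.inl (le_sup_of_le_left hx)
    · exact Or.inl (le_sup_of_le_right hy)
    · exact Or.inr (by rw [compl_sup]; exact le_inf hx hy)
  infClosed' := by
    rintro x (hx | hx) y (hy | hy)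
    · exact Or.inl (le_inf hx hy)
    · exact Or.inr (by rw [compl_inf]; exact le_sup_of_le_right hy)
    · exact Or.inr (by rw [compl_inf]; exact le_sup_of_le_left hx)
    · exact Or.inr (by rw [compl_inf]; exact le_sup_of_le_left hx)

theorem mem_decidedBy : b ∈ decidedBy m ↔ m ≤ b ∨ m ≤ bᶜ := Iff.rfl

theorem mem_decidedBy_iff_inf_eq : b ∈ decidedBy m ↔ m ⊓ b = ⊥ ∨ m ⊓ b = m := by
  rw [mem_decidedBy, or_comm, le_compl_iff_disjoint_right, disjoint_iff, inf_eq_left]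

theorem mem_decidedBy_iff_of_le (h : b ≤ m) : b ∈ decidedBy m ↔ b = ⊥ ∨ b = m := by
  rw [mem_decidedBy_iff_inf_eq, inf_eq_right.2 h]

theorem isAtomOfSet_coe_iff :
    IsAtomOfSet (B : Set L) a ↔ a ∈ B ∧ a ≠ ⊥ ∧ B ≤ decidedBy a := by
  refine and_congr_right fun ha => and_congr_right fun _ =>
    ⟨fun hatom b hb => ?_, fun hB b hb hba => ?_⟩
  · exact mem_decidedBy_iff_inf_eq.2 (hatom (a ⊓ b) (B.inf_mem ha hb) inf_le_left)
  · exact (mem_decidedBy_iff_of_le hba).1 (hB hb)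

theorem isAtomOfSet_closure_iff :
    IsAtomOfSet (closure S : Set L) a ↔ a ∈ closure S ∧ a ≠ ⊥ ∧ S ⊆ decidedBy a := by
  rw [isAtomOfSet_coe_iff, closure_le]

end

section Minterm

variable {L : Type*} [BooleanAlgebra L] [DecidableEq L] {S T : Finset L}
  {B : BooleanSubalgebra L} {a : L}

/-- The minterm of `T` over a finite set `S` of generators: the meet of the elements of `T` and the
complements of the remaining elements of `S`. Empty meets are `⊤`; the notion is meant for `T ⊆ S`,
but this is not built in. -/
def minterm (S T : Finset L) : L := T.inf id ⊓ (S \ T).inf fun s => sᶜ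

theorem le_minterm_iff : a ≤ minterm S T ↔ (∀ s ∈ T, a ≤ s) ∧ ∀ s ∈ S \ T, a ≤ sᶜ := by
  simp only [minterm, le_inf_iff, Finset.le_inf_iff, id_eq]

theorem minterm_mem (hS : (S : Set L) ⊆ B) (hT : T ⊆ S) : minterm S T ∈ B := by
  have inf_mem : ∀ x ∈ (B : Set L), ∀ y ∈ (B : Set L), x ⊓ y ∈ (B : Set L) :=
    fun _ hx _ hy => B.inf_mem hx hy
  exact B.inf_mem (Finset.inf_mem _ B.top_mem inf_mem _ _ fun s hs => hS (hT hs))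
    (Finset.inf_mem _ B.top_mem inf_mem _ _ fun s hs =>
      B.compl_mem (hS (Finset.sdiff_subset hs)))

theorem subset_decidedBy_minterm (S T : Finset L) : (S : Set L) ⊆ decidedBy (minterm S T) := by
  intro s hs
  obtain ⟨le_of_mem, le_compl_of_mem⟩ := le_minterm_iff.1 (le_refl (minterm S T))
  by_cases hT : s ∈ T
  · exact Or.inl (le_of_mem s hT)
  · exact Or.inr (le_compl_of_mem s (Finset.mem_sdiff.2 ⟨hs, hT⟩))

theorem exists_le_minterm (h : (S : Set L) ⊆ decidedBy a) : ∃ T ⊆ S, a ≤ minterm S T := by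
  classical
  refine ⟨{s ∈ S | a ≤ s}, Finset.filter_subset _ _, le_minterm_iff.2 ⟨?_, fun s hs => ?_⟩⟩
  · exact fun s hs => (Finset.mem_filter.1 hs).2
  · obtain ⟨hsS, hs⟩ := Finset.mem_sdiff.1 hs
    exact (h hsS).resolve_left fun has => hs (Finset.mem_filter.2 ⟨hsS, has⟩)

end Minterm

/-- An element `a` of a Boolean algebra `L` is an atom of the Boolean subalgebra generated by a
finite subset `S ⊆ L` if and only if `a ≠ ⊥` and `a = (⨅ s ∈ T, s) ⊓ (⨅ s ∈ S \ T, sᶜ)` for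
some `T ⊆ S` (empty infima being `⊤`). -/
theorem atoms_of_finitely_generated_boolean_subalgebra
    {L : Type*} [BooleanAlgebra L] [DecidableEq L] (S : Finset L) (a : L) :
    IsAtomOfSet (boolGen (↑S : Set L)) a ↔
      a ≠ ⊥ ∧ ∃ T ⊆ S, a = T.inf id ⊓ (S \ T).inf (fun s => sᶜ) := by
  rw [boolGen_eq_closure, isAtomOfSet_closure_iff]
  change _ ↔ a ≠ ⊥ ∧ ∃ T ⊆ S, a = minterm S T
  constructor
  · rintro ⟨ha, ha_ne, hdecided⟩
    obtain ⟨T, hT, hle⟩ := exists_le_minterm hdecided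
    have ha_decided : a ∈ decidedBy (minterm S T) :=
      BooleanSubalgebra.closure_le.2 (subset_decidedBy_minterm S T) ha
    exact ⟨ha_ne, T, hT, ((mem_decidedBy_iff_of_le hle).1 ha_decided).resolve_left ha_ne⟩
  · rintro ⟨hne, T, hT, rfl⟩
    exact ⟨minterm_mem BooleanSubalgebra.subset_closure hT, hne, subset_decidedBy_minterm S T⟩
end

section
/- Let i_1, …, i_k be pairwise distinct natural numbers and let B be the Boolean subalgebra of Set I generated by {u i_1, …, u i_k}. Then for all n, m with 1 ≤ n, m ≤ k, i_n < i_m, and E i_n i_m, the singleton {(i_n, i_m)}, which equals u i_n ∩ u i_m, is an atom of B. -/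
/-!
A singleton is an atom of the whole power set, hence of every subalgebra that contains it, so only
membership is at stake. A pair in `u a ∩ u b` has both `a` and `b` among its coordinates, and the
first coordinate of a point of `I` is at most the second, so for `a < b` the pair is `(a, b)`.
-/

section BooleanAlgebra

variable {L : Type*} [BooleanAlgebra L]

theorem subset_boolGen (S : Set L) : S ⊆ boolGen S :=
  Set.subset_sInter fun _ hB => hB.2

theorem inf_mem_boolGen {S : Set L} {x y : L} (hx : x ∈ boolGen S) (hy : y ∈ boolGen S) :
    x ⊓ y ∈ boolGen S := by
  intro B hB
  obtain ⟨-, -, inf_mem, -, -⟩ := hB.1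
  exact inf_mem x (hx B hB) y (hy B hB)

theorem isAtomOfSet_of_isAtom {B : Set L} {a : L} (ha : IsAtom a) (haB : a ∈ B) :
    IsAtomOfSet B a :=
  ⟨haB, ha.ne_bot, fun _ _ hba => ha.le_iff.mp hba⟩

end BooleanAlgebra

section Graph

variable {E : ℕ → ℕ → Prop} {a b : ℕ}

theorem fst_eq_or_snd_eq_of_mem_u {p : I} (hp : p ∈ u E a) : p.val.1 = a ∨ p.val.2 = a :=
  hp.imp And.left And.left

theorem mk_mem_u_left (E : ℕ → ℕ → Prop) (hab : a ≤ b) : (⟨(a, b), hab⟩ : I) ∈ u E a :=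
  Or.inl ⟨rfl, hab⟩

theorem mk_mem_u_right (hab : a < b) (hE : E a b) : (⟨(a, b), hab.le⟩ : I) ∈ u E b :=
  Or.inr ⟨rfl, hab, hE⟩

theorem eq_mk_of_mem_u_of_mem_u {p : I} (hab : a < b) (ha : p ∈ u E a) (hb : p ∈ u E b) :
    p = ⟨(a, b), hab.le⟩ := by
  have hp : p.val.1 ≤ p.val.2 := p.property
  have hpa := fst_eq_or_snd_eq_of_mem_u ha
  have hpb := fst_eq_or_snd_eq_of_mem_u hb
  have hfst : p.val.1 = a := by omega
  have hsnd : p.val.2 = b := by omega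
  exact Subtype.ext (Prod.ext hfst hsnd)

theorem singleton_eq_u_inter_u (hab : a < b) (hE : E a b) :
    ({⟨(a, b), hab.le⟩} : Set I) = u E a ∩ u E b := by
  symm
  rw [Set.eq_singleton_iff_unique_mem]
  exact ⟨⟨mk_mem_u_left E hab.le, mk_mem_u_right hab hE⟩,
    fun _ hp => eq_mk_of_mem_u_of_mem_u hab hp.1 hp.2⟩

theorem singleton_is_atom_general {S : Set (Set I)} (hab : a < b) (hE : E a b)
    (ha : u E a ∈ S) (hb : u E b ∈ S) :
    ({⟨(a, b), hab.le⟩} : Set I) = u E a ∩ u E b ∧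
    IsAtomOfSet (boolGen S) {⟨(a, b), hab.le⟩} := by
  have heq := singleton_eq_u_inter_u hab hE
  have hmem : ({⟨(a, b), hab.le⟩} : Set I) ∈ boolGen S := by
    rw [heq]
    exact inf_mem_boolGen (subset_boolGen S ha) (subset_boolGen S hb)
  exact ⟨heq, isAtomOfSet_of_isAtom (Set.isAtom_singleton _) hmem⟩

end Graph

/-- For pairwise distinct `i 1, …, i k` and positions `n, m` with `i n < i m` and `E (i n) (i m)`,
the singleton `{(i n, i m)}`, which equals `u (i n) ∩ u (i m)`, is an atom of the Boolean
subalgebra of `Set I` generated by `{u (i 1), …, u (i k)}`. -/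
theorem singleton_is_atom (E : ℕ → ℕ → Prop)
    (hsym : ∀ a b, E a b → E b a) (hirr : ∀ a, ¬ E a a)
    (k : ℕ) (i : Fin k → ℕ) (hi : Function.Injective i)
    (n m : Fin k) (hnm : i n < i m) (hE : E (i n) (i m)) :
    ({⟨(i n, i m), by exact hnm.le⟩} : Set I) = u E (i n) ∩ u E (i m) ∧
    IsAtomOfSet (boolGen (Set.range fun ℓ => u E (i ℓ)))
      {⟨(i n, i m), by exact hnm.le⟩} := by
  exact singleton_is_atom_general hnm hE (Set.mem_range_self n) (Set.mem_range_self m)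
end
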